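/- arXiv:2312.07145 — 5 statements merged into one kernel-verified Lean document; each statement's English description precedes it below -/
import Mathlib

section
/- Let p be a positive integer and g : ℝ^p → ℝ be continuously differentiable with locally Lipschitz gradient. Suppose g attains its infimum g* = inf_θ g(θ) and let Θ* = {θ : g(θ) = g*} be the (nonempty) set of global minimizers. If g satisfies the Polyak–Łojasiewicz (PL) condition with constant μ > 0, i.e. for all θ ∈ ℝ^p, g(θ) − g* ≤ (1/(2μ))‖∇g(θ)‖₂², then g satisfies the Quadratic Growth (QG) condition with the same constant: for all θ ∈ ℝ^p, g(θ) − g* ≥ (μ/2)·dist(θ, Θ*)², where dist(θ, Θ*) = inf_{θ* ∈ Θ*} ‖θ − θ*‖₂. -/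
open scoped RealInnerProductSpace

/-- **PL implies QG.** If a continuously differentiable `g : ℝ^p → ℝ` with locally
Lipschitz gradient attains its infimum `gstar` and satisfies the Polyak–Łojasiewicz
condition with constant `μ > 0`, then it satisfies the Quadratic Growth condition with
the same constant, where the distance is to the set of global minimizers. -/
theorem pl_implies_qg (p : ℕ) (hp : 1 ≤ p)
    (g : EuclideanSpace ℝ (Fin p) → ℝ)
    (hg : ContDiff ℝ 1 g)
    (hgradLip : LocallyLipschitz (gradient g))
    (μ gstar : ℝ) (hμ : 0 < μ)
    (hglb : ∀ θ, gstar ≤ g θ)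
    (hattain : ∃ θ, g θ = gstar)
    (hPL : ∀ θ, g θ - gstar ≤ (1 / (2 * μ)) * ‖gradient g θ‖ ^ 2) :
    ∀ θ, g θ - gstar ≥ (μ / 2) * (Metric.infDist θ {θ' | g θ' = gstar}) ^ 2 := by
  intro θ
  by_contra hcon
  have hlt := not_le.mp hcon
  set S : Set (EuclideanSpace ℝ (Fin p)) := {θ' | g θ' = gstar} with hS
  set D := Metric.infDist θ S with hD
  have hD0 : 0 ≤ D := Metric.infDist_nonneg
  have hDpos : 0 < D := by
    rcases hD0.lt_or_eq with h | h
    · exact h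
    · rw [← h] at hlt
      have := hglb θ
      norm_num at hlt
      linarith
  have hgc : Continuous g := hg.continuous
  obtain ⟨h, hh⟩ : ∃ h : EuclideanSpace ℝ (Fin p) → ℝ, h = fun x => √(g x - gstar) := ⟨_, rfl⟩
  have hhc : Continuous h := by rw [hh]; fun_prop
  have hh0 : ∀ x, 0 ≤ h x := fun x => by rw [hh]; exact Real.sqrt_nonneg _
  have hhsq : ∀ x, h x ^ 2 = g x - gstar := fun x => by
    rw [hh]; exact Real.sq_sqrt (by linarith [hglb x])
  have hc2 : √(μ / 2) ^ 2 = μ / 2 := Real.sq_sqrt (by positivity)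
  have hlt' : h θ / D < √(μ / 2) := by
    rw [div_lt_iff₀ hDpos]
    apply lt_of_pow_lt_pow_left₀ 2 (by positivity)
    rw [hhsq, mul_pow, hc2]
    exact hlt
  obtain ⟨c, hc1, hcc⟩ := exists_between hlt'
  have hc0 : 0 < c := lt_of_le_of_lt (div_nonneg (hh0 θ) hD0) hc1
  rw [div_lt_iff₀ hDpos] at hc1
  have hφc : Continuous fun x => h x + c * dist x θ := by fun_prop
  obtain ⟨x, hxB, hx⟩ := (isCompact_closedBall θ D).exists_isMinOn
    ⟨θ, Metric.mem_closedBall_self hD0⟩ hφc.continuousOn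
  have hxθ : h x + c * dist x θ ≤ h θ := by
    have := hx (Metric.mem_closedBall_self hD0)
    simpa using this
  have hxall : ∀ y, h x + c * dist x θ ≤ h y + c * dist y θ := by
    intro y
    by_cases hy : y ∈ Metric.closedBall θ D
    · exact hx hy
    · rw [Metric.mem_closedBall, not_le] at hy
      have := hh0 y
      nlinarith
  have hxD : dist x θ < D := by
    have := hh0 x
    by_contra hge
    nlinarith
  have hxS : g x ≠ gstar := by
    intro hxs
    have : D ≤ dist θ x := Metric.infDist_le_dist_of_mem (s := S) hxs
    rw [dist_comm] at this
    linarith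
  have hgx : g x - gstar ≠ 0 := sub_ne_zero.mpr hxS
  have hxpos : 0 < h x := by
    refine (hh0 x).lt_of_ne fun h0 => hgx ?_
    rw [← hhsq, ← h0]; norm_num
  set G := gradient g x with hG
  have hgrad : HasGradientAt g G x := ((hg.differentiable one_ne_zero) x).hasGradientAt
  have hline : HasDerivAt (fun t : ℝ => x - t • G) (-G) 0 := by
    simpa using ((hasDerivAt_id (0 : ℝ)).smul_const G).const_sub x
  have hder0 : HasDerivAt (fun t : ℝ => g (x - t • G)) (-‖G‖ ^ 2) 0 := by
    have h1 : HasFDerivAt g (InnerProductSpace.toDual ℝ _ G) (x - (0 : ℝ) • G) := by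
      simpa using hgrad.hasFDerivAt
    have h2 := h1.comp_hasDerivAt (0 : ℝ) hline
    simpa [Function.comp_def] using h2
  have hder : HasDerivAt (fun t : ℝ => h (x - t • G)) (-‖G‖ ^ 2 / (2 * h x)) 0 := by
    have := (hder0.sub_const gstar).sqrt (by simpa using hgx)
    rw [hh]
    simpa using this
  have hlim := hder.tendsto_slope_zero_right
  have hge : -(c * ‖G‖) ≤ -‖G‖ ^ 2 / (2 * h x) := by
    refine ge_of_tendsto hlim ?_
    filter_upwards [self_mem_nhdsWithin] with t ht
    have ht : 0 < t := ht
    have h1 := hxall (x - t • G)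
    have h2 : dist (x - t • G) θ ≤ t * ‖G‖ + dist x θ := by
      refine (dist_triangle _ x _).trans ?_
      have : dist (x - t • G) x = t * ‖G‖ := by
        rw [dist_eq_norm]; simp [norm_smul, abs_of_pos ht]
      rw [this]
    have h3 : c * dist (x - t • G) θ ≤ c * (t * ‖G‖ + dist x θ) :=
      mul_le_mul_of_nonneg_left h2 hc0.le
    simp only [zero_add, zero_smul, sub_zero, smul_eq_mul]
    rw [inv_mul_eq_div, le_div_iff₀ ht]
    linarith
  have hPLx := hPL x
  rw [← hhsq, ← hG, one_div, inv_mul_eq_div, le_div_iff₀ (by positivity)] at hPLx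
  have hGpos : 0 < ‖G‖ := by
    refine (norm_nonneg _).lt_of_ne fun h0 => ?_
    rw [← h0] at hPLx
    have : 0 < h x ^ 2 * (2 * μ) := by positivity
    linarith
  rw [le_div_iff₀ (by positivity)] at hge
  have hG2 : ‖G‖ ≤ c * (2 * h x) := by
    by_contra hn
    nlinarith
  have hG3 : ‖G‖ ^ 2 ≤ (c * (2 * h x)) ^ 2 := pow_le_pow_left₀ hGpos.le hG2 2
  have hc3 : c ^ 2 < μ / 2 := by
    rw [← hc2]; exact pow_lt_pow_left₀ hcc hc0.le two_ne_zero
  have : 0 < h x ^ 2 := by positivity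
  nlinarith
end

section
/- Let p ≥ 1, T ≥ 1, μ > 0, G ≥ 0, ε ≥ 0, and let L_1, …, L_T : ℝ^p → ℝ be differentiable. Let θ̃ ∈ ℝ^p and let the iterates satisfy θ_{t+1} = θ_t − η_t ∇L_t(θ_t) with step sizes η_t = 4/(μt). Suppose for every t ∈ {1,…,T}: ‖∇L_t(θ_t)‖₂ ≤ G and L_t(θ_t) − L_t(θ̃) ≤ ⟨θ_t − θ̃, ∇L_t(θ_t)⟩ + ε. Then Σ_{t=1}^T [L_t(θ_t) − L_t(θ̃)] ≤ (μ/8)·Σ_{t=1}^T ‖θ_t − θ̃‖₂² + (2G²/μ)(1 + ln T) + εT. -/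
open scoped RealInnerProductSpace

/-- **Summed OGD bound.** With step sizes `η_t = 4/(μ t)`, gradient bounds `G`, and
almost-convexity with error `ε` on every round `t ∈ {1, …, T}`, the cumulative excess
loss of online gradient descent against a comparator `θtil` satisfies
`Σ_{t=1}^T (L_t(θ_t) - L_t(θtil)) ≤ (μ/8) Σ ‖θ_t - θtil‖² + (2G²/μ)(1 + ln T) + εT`. -/
theorem ogd_summed_bound (p T : ℕ) (hp : 1 ≤ p) (hT : 1 ≤ T)
    (μ G ε : ℝ) (hμ : 0 < μ) (hG : 0 ≤ G) (hε : 0 ≤ ε)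
    (L : ℕ → EuclideanSpace ℝ (Fin p) → ℝ) (hL : ∀ t, Differentiable ℝ (L t))
    (θtil : EuclideanSpace ℝ (Fin p)) (θ : ℕ → EuclideanSpace ℝ (Fin p))
    (hupd : ∀ t ∈ Finset.Icc 1 T,
      θ (t + 1) = θ t - (4 / (μ * t)) • gradient (L t) (θ t))
    (hgradbd : ∀ t ∈ Finset.Icc 1 T, ‖gradient (L t) (θ t)‖ ≤ G)
    (hac : ∀ t ∈ Finset.Icc 1 T,
      L t (θ t) - L t θtil ≤ ⟪θ t - θtil, gradient (L t) (θ t)⟫ + ε) :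
    ∑ t ∈ Finset.Icc 1 T, (L t (θ t) - L t θtil)
      ≤ (μ / 8) * ∑ t ∈ Finset.Icc 1 T, ‖θ t - θtil‖ ^ 2
        + (2 * G ^ 2 / μ) * (1 + Real.log T) + ε * T := by
  have step : ∀ t ∈ Finset.Icc 1 T, L t (θ t) - L t θtil ≤
      μ * t / 8 * (‖θ t - θtil‖ ^ 2 - ‖θ (t + 1) - θtil‖ ^ 2)
        + 2 * G ^ 2 / μ * (t : ℝ)⁻¹ + ε := by
    intro t ht
    have ht0 : (0 : ℝ) < t := by
      have := (Finset.mem_Icc.mp ht).1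
      exact_mod_cast this
    refine (hac t ht).trans ?_
    have hg := hgradbd t ht
    have e : θ (t + 1) - θtil = (θ t - θtil) - (4 / (μ * t)) • gradient (L t) (θ t) := by
      rw [hupd t ht]; abel
    rw [e, norm_sub_sq_real (θ t - θtil), inner_smul_right, norm_smul, mul_pow, Real.norm_eq_abs, sq_abs]
    generalize gradient (L t) (θ t) = g at *
    have h2 : ‖g‖ ^ 2 ≤ G ^ 2 := pow_le_pow_left₀ (norm_nonneg _) hg 2
    have h3 : 2 * ‖g‖ ^ 2 / μ * (t : ℝ)⁻¹ ≤ 2 * G ^ 2 / μ * (t : ℝ)⁻¹ := by gcongr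
    have h4 : μ * t / 8 * (‖θ t - θtil‖ ^ 2 - (‖θ t - θtil‖ ^ 2
        - 2 * (4 / (μ * t) * ⟪θ t - θtil, g⟫) + (4 / (μ * t)) ^ 2 * ‖g‖ ^ 2))
        = ⟪θ t - θtil, g⟫ - 2 * ‖g‖ ^ 2 / μ * (t : ℝ)⁻¹ := by
      field_simp
      ring
    rw [h4]
    linarith
  have key : ∀ n : ℕ, n ≤ T → ∑ t ∈ Finset.Icc 1 n, (L t (θ t) - L t θtil)
      ≤ (μ / 8) * ∑ t ∈ Finset.Icc 1 n, ‖θ t - θtil‖ ^ 2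
        - μ * n / 8 * ‖θ (n + 1) - θtil‖ ^ 2
        + (2 * G ^ 2 / μ) * (harmonic n : ℝ) + ε * n := by
    intro n
    induction n with
    | zero => intro _; simp
    | succ n ih =>
      intro hn
      have h1 := ih (by omega)
      have h2 := step (n + 1) (Finset.mem_Icc.mpr ⟨by omega, hn⟩)
      rw [Finset.sum_Icc_succ_top (by omega), Finset.sum_Icc_succ_top (by omega), harmonic_succ]
      push_cast at h2 ⊢
      linarith
  have h := key T le_rfl
  have h5 : (2 * G ^ 2 / μ) * (harmonic T : ℝ) ≤ (2 * G ^ 2 / μ) * (1 + Real.log T) :=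
    mul_le_mul_of_nonneg_left (harmonic_le_one_add_log T) (by positivity)
  have h6 : 0 ≤ μ * T / 8 * ‖θ (T + 1) - θtil‖ ^ 2 := by positivity
  linarith
end

section
/- Let p ≥ 1, T ≥ 1, μ > 0, G ≥ 0, ε ≥ 0, and let L_1, …, L_T : ℝ^p → ℝ be nonnegative differentiable functions, each with a unique global minimizer θ_t* satisfying the QG inequality L_t(θ) − L_t(θ_t*) ≥ (μ/2)‖θ − θ_t*‖₂² for all θ ∈ ℝ^p. Let θ* ∈ ℝ^p be any comparator, and let the iterates satisfy θ_{t+1} = θ_t − η_t∇L_t(θ_t) with η_t = 4/(μt). Suppose for every t ∈ {1,…,T}: ‖∇L_t(θ_t)‖₂ ≤ G and L_t(θ_t) − L_t(θ*) ≤ ⟨θ_t − θ*, ∇L_t(θ_t)⟩ + ε. Then the regret satisfies Σ_{t=1}^T L_t(θ_t) − Σ_{t=1}^T L_t(θ*) ≤ 2·Σ_{t=1}^T L_t(θ*) + (4G²/μ)(1 + ln T) + 2εT. -/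
open scoped RealInnerProductSpace

/-- **Regret bound under the QG condition.** For nonnegative differentiable losses
`L_t`, each with a unique global minimizer `θmin t` satisfying the quadratic growth
inequality with constant `μ > 0`, online gradient descent with step sizes
`η_t = 4/(μ t)`, gradient bounds `G`, and almost-convexity error `ε` satisfies
`Σ L_t(θ_t) - Σ L_t(θstar) ≤ 2 Σ L_t(θstar) + (4G²/μ)(1 + ln T) + 2εT`. -/
theorem qg_regret_bound (p T : ℕ) (hp : 1 ≤ p) (hT : 1 ≤ T)
    (μ G ε : ℝ) (hμ : 0 < μ) (hG : 0 ≤ G) (hε : 0 ≤ ε)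
    (L : ℕ → EuclideanSpace ℝ (Fin p) → ℝ)
    (hdiff : ∀ t, Differentiable ℝ (L t))
    (hnonneg : ∀ t ∈ Finset.Icc 1 T, ∀ θ, 0 ≤ L t θ)
    (θmin : ℕ → EuclideanSpace ℝ (Fin p))
    (hmin : ∀ t ∈ Finset.Icc 1 T, ∀ θ, L t (θmin t) ≤ L t θ)
    (huniq : ∀ t ∈ Finset.Icc 1 T, ∀ θ', (∀ θ, L t θ' ≤ L t θ) → θ' = θmin t)
    (hQG : ∀ t ∈ Finset.Icc 1 T, ∀ θ,
      L t θ - L t (θmin t) ≥ (μ / 2) * ‖θ - θmin t‖ ^ 2)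
    (θstar : EuclideanSpace ℝ (Fin p)) (θ : ℕ → EuclideanSpace ℝ (Fin p))
    (hupd : ∀ t ∈ Finset.Icc 1 T,
      θ (t + 1) = θ t - (4 / (μ * t)) • gradient (L t) (θ t))
    (hgradbd : ∀ t ∈ Finset.Icc 1 T, ‖gradient (L t) (θ t)‖ ≤ G)
    (hac : ∀ t ∈ Finset.Icc 1 T,
      L t (θ t) - L t θstar ≤ ⟪θ t - θstar, gradient (L t) (θ t)⟫ + ε) :
    ∑ t ∈ Finset.Icc 1 T, L t (θ t) - ∑ t ∈ Finset.Icc 1 T, L t θstar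
      ≤ 2 * ∑ t ∈ Finset.Icc 1 T, L t θstar
        + (4 * G ^ 2 / μ) * (1 + Real.log T) + 2 * ε * T := by
  have step : ∀ t ∈ Finset.Icc 1 T, L t (θ t) - 3 * L t θstar
      ≤ (4 * G ^ 2 / μ) * (t : ℝ)⁻¹ + 2 * ε
        + μ / 4 * (((t : ℝ) - 1) * ‖θ t - θstar‖ ^ 2 - t * ‖θ (t + 1) - θstar‖ ^ 2) := by
    intro t ht
    have ht1 : 1 ≤ t := (Finset.mem_Icc.mp ht).1
    have htp : (0 : ℝ) < t := by exact_mod_cast ht1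
    have h1 := hQG t ht (θ t)
    have h2 := hQG t ht θstar
    have h3 := hnonneg t ht (θmin t)
    have hg := hgradbd t ht
    have ha := hac t ht
    have hD : ‖θ t - θstar‖ ^ 2 ≤ 2 * ‖θ t - θmin t‖ ^ 2 + 2 * ‖θstar - θmin t‖ ^ 2 := by
      have e : θ t - θstar = (θ t - θmin t) - (θstar - θmin t) := by abel
      have h := parallelogram_law_with_norm ℝ (θ t - θmin t) (θstar - θmin t)
      rw [e]
      nlinarith [mul_self_nonneg ‖(θ t - θmin t) + (θstar - θmin t)‖]
    have hg2 : ‖gradient (L t) (θ t)‖ ^ 2 ≤ G ^ 2 :=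
      pow_le_pow_left₀ (norm_nonneg _) hg 2
    have hn : ‖θ (t + 1) - θstar‖ ^ 2 = ‖θ t - θstar‖ ^ 2
        - 2 * (4 / (μ * t)) * ⟪θ t - θstar, gradient (L t) (θ t)⟫
        + (4 / (μ * t)) ^ 2 * ‖gradient (L t) (θ t)‖ ^ 2 := by
      have e : θ (t + 1) - θstar
          = (θ t - θstar) - (4 / (μ * t)) • gradient (L t) (θ t) := by
        rw [hupd t ht]; abel
      rw [e, norm_sub_sq_real, inner_smul_right, norm_smul, mul_pow, Real.norm_eq_abs, sq_abs]
      ring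
    have hn2 : μ / 4 * (t * ‖θ (t + 1) - θstar‖ ^ 2) = μ / 4 * (t * ‖θ t - θstar‖ ^ 2)
        - 2 * ⟪θ t - θstar, gradient (L t) (θ t)⟫
        + 4 / μ * (t : ℝ)⁻¹ * ‖gradient (L t) (θ t)‖ ^ 2 := by
      rw [hn]; field_simp
    have hg3 : 4 / μ * (t : ℝ)⁻¹ * ‖gradient (L t) (θ t)‖ ^ 2 ≤ 4 / μ * (t : ℝ)⁻¹ * G ^ 2 :=
      mul_le_mul_of_nonneg_left hg2 (by positivity)
    have hD2 := mul_le_mul_of_nonneg_left hD (by positivity : 0 ≤ μ / 4)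
    have e4 : (4 * G ^ 2 / μ) * (t : ℝ)⁻¹ = 4 / μ * (t : ℝ)⁻¹ * G ^ 2 := by ring
    rw [e4]
    linarith
  have tel : ∀ n : ℕ, n ≤ T → ∑ t ∈ Finset.Icc 1 n, (L t (θ t) - 3 * L t θstar)
      ≤ (4 * G ^ 2 / μ) * ∑ t ∈ Finset.Icc 1 n, (t : ℝ)⁻¹ + 2 * ε * n
        - μ / 4 * (n * ‖θ (n + 1) - θstar‖ ^ 2) := by
    intro n
    induction n with
    | zero => intro _; simp
    | succ k ih =>
      intro hk
      have h := step (k + 1) (Finset.mem_Icc.mpr ⟨by omega, hk⟩)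
      have ih' := ih (by omega)
      rw [Finset.sum_Icc_succ_top (by omega), Finset.sum_Icc_succ_top (by omega)]
      push_cast at h ⊢
      linarith
  have hfin := tel T le_rfl
  have hharm : ∑ t ∈ Finset.Icc 1 T, (t : ℝ)⁻¹ ≤ 1 + Real.log T := by
    have h := harmonic_le_one_add_log T
    rw [harmonic_eq_sum_Icc] at h
    push_cast at h
    exact h
  have hh := mul_le_mul_of_nonneg_left hharm (by positivity : 0 ≤ 4 * G ^ 2 / μ)
  have hpos : 0 ≤ μ / 4 * (T * ‖θ (T + 1) - θstar‖ ^ 2) := by positivity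
  rw [Finset.sum_sub_distrib, ← Finset.mul_sum] at hfin
  linarith
end

section
/- Let p, n ≥ 1, let f_1, …, f_n : ℝ^p → ℝ be differentiable, let y ∈ ℝ^n, and define the empirical squared loss L(θ) = (1/(2n))·Σ_{i=1}^n (y_i − f_i(θ))². Fix θ ∈ ℝ^p and suppose the Gram (neural tangent kernel) matrix K(θ) ∈ ℝ^{n×n} with entries K(θ)_{ij} = ⟨∇f_i(θ), ∇f_j(θ)⟩ satisfies λ_min(K(θ)) ≥ λ0 > 0. Then ‖∇L(θ)‖₂² ≥ (2λ0/n)·L(θ). -/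
open scoped RealInnerProductSpace

/-- **PL inequality for the squared loss from the NTK condition.** If the Gram
(neural tangent kernel) matrix `K(θ)_{ij} = ⟪∇f_i(θ), ∇f_j(θ)⟫` has smallest
eigenvalue at least `lam0 > 0` (stated equivalently via its quadratic form:
`vᵀ K(θ) v ≥ lam0 ‖v‖²` for all `v`), then the empirical squared loss
`L(θ) = (1/(2n)) Σ (y_i - f_i(θ))²` satisfies `‖∇L(θ)‖² ≥ (2lam0/n) L(θ)`. -/
theorem squared_loss_pl_inequality (p n : ℕ) (hp : 1 ≤ p) (hn : 1 ≤ n)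
    (f : Fin n → EuclideanSpace ℝ (Fin p) → ℝ)
    (hf : ∀ i, Differentiable ℝ (f i))
    (y : Fin n → ℝ)
    (L : EuclideanSpace ℝ (Fin p) → ℝ)
    (hL : L = fun θ => (1 / (2 * (n : ℝ))) * ∑ i, (y i - f i θ) ^ 2)
    (θ : EuclideanSpace ℝ (Fin p)) (lam0 : ℝ) (hlam0 : 0 < lam0)
    (hNTK : ∀ v : Fin n → ℝ,
      lam0 * ∑ i, v i ^ 2
        ≤ ∑ i, ∑ j, v i * v j * ⟪gradient (f i) θ, gradient (f j) θ⟫) :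
    ‖gradient L θ‖ ^ 2 ≥ (2 * lam0 / (n : ℝ)) * L θ := by
  have hn0 : (n : ℝ) ≠ 0 := by positivity
  have hg : HasGradientAt L
      (-(1 / (n : ℝ)) • ∑ i, (y i - f i θ) • gradient (f i) θ) θ := by
    rw [hasGradientAt_iff_hasFDerivAt, hL]
    have h1 : ∀ i ∈ Finset.univ, HasFDerivAt (fun θ => (y i - f i θ) ^ 2) _ θ := fun i _ =>
      (((hf i θ).hasGradientAt.hasFDerivAt).const_sub (y i)).pow 2
    have h2 := (HasFDerivAt.fun_sum h1).const_mul (1 / (2 * (n : ℝ)))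
    refine h2.congr_fderiv ?_
    ext v
    simp only [map_smul, map_sum, ContinuousLinearMap.smul_apply, ContinuousLinearMap.sum_apply,
      ContinuousLinearMap.neg_apply, InnerProductSpace.toDual_apply_apply, smul_eq_mul,
      Finset.mul_sum, nsmul_eq_mul]
    refine Finset.sum_congr rfl fun i _ => ?_
    field_simp
    simp
  have hK := hNTK (fun i => y i - f i θ)
  have hnorm : ‖∑ i, (y i - f i θ) • gradient (f i) θ‖ ^ 2
      = ∑ i, ∑ j, (y i - f i θ) * (y j - f j θ) * ⟪gradient (f i) θ, gradient (f j) θ⟫ := by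
    rw [← real_inner_self_eq_norm_sq, sum_inner]
    refine Finset.sum_congr rfl fun i _ => ?_
    rw [inner_sum]
    refine Finset.sum_congr rfl fun j _ => ?_
    rw [real_inner_smul_left, real_inner_smul_right]
    ring
  rw [hg.gradient, norm_smul, mul_pow, hnorm, hL, ge_iff_le, Real.norm_eq_abs, sq_abs]
  calc _ = (-(1 / (n : ℝ))) ^ 2 * (lam0 * ∑ i, (y i - f i θ) ^ 2) := by field_simp
    _ ≤ _ := mul_le_mul_of_nonneg_left hK (sq_nonneg _)
end

section
/- Let p, n ≥ 1, let f_1, …, f_n : ℝ^p → ℝ be continuously differentiable with locally Lipschitz gradients, let y ∈ ℝ^n, and define L(θ) = (1/(2n))·Σ_{i=1}^n (y_i − f_i(θ))². Suppose (interpolation) there exists θ̄ with f_i(θ̄) = y_i for all i, so inf L = 0 and the minimizer set Θ* = {θ : f_i(θ) = y_i for all i} is nonempty, and suppose that for every θ ∈ ℝ^p the Gram matrix K(θ)_{ij} = ⟨∇f_i(θ), ∇f_j(θ)⟩ satisfies λ_min(K(θ)) ≥ λ0 > 0. Then L satisfies the QG condition with constant λ0/n: for all θ ∈ ℝ^p,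 L(θ) ≥ (λ0/(2n))·dist(θ, Θ*)². -/
open scoped RealInnerProductSpace

/-- **QG condition for the squared loss under interpolation and the NTK condition.**
If the predictors interpolate the labels at some point (so the minimizer set
`Θ* = {θ | ∀ i, f_i(θ) = y_i}` is nonempty and `inf L = 0`) and the Gram (NTK) matrix
has smallest eigenvalue at least `lam0 > 0` everywhere (stated via its quadratic form),
then the empirical squared loss `L(θ) = (1/(2n)) Σ (y_i - f_i(θ))²` satisfies quadratic
growth with constant `lam0/n`: `L(θ) ≥ (lam0/(2n)) · dist(θ, Θ*)²`. -/
theorem squared_loss_qg (p n : ℕ) (hp : 1 ≤ p) (hn : 1 ≤ n)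
    (f : Fin n → EuclideanSpace ℝ (Fin p) → ℝ)
    (hf : ∀ i, ContDiff ℝ 1 (f i))
    (hfgradLip : ∀ i, LocallyLipschitz (gradient (f i)))
    (y : Fin n → ℝ)
    (L : EuclideanSpace ℝ (Fin p) → ℝ)
    (hL : L = fun θ => (1 / (2 * (n : ℝ))) * ∑ i, (y i - f i θ) ^ 2)
    (hinterp : ∃ θbar, ∀ i, f i θbar = y i)
    (lam0 : ℝ) (hlam0 : 0 < lam0)
    (hNTK : ∀ θ : EuclideanSpace ℝ (Fin p), ∀ v : Fin n → ℝ,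
      lam0 * ∑ i, v i ^ 2
        ≤ ∑ i, ∑ j, v i * v j * ⟪gradient (f i) θ, gradient (f j) θ⟫) :
    ∀ θ, L θ ≥ (lam0 / (2 * (n : ℝ)))
      * (Metric.infDist θ {θ' | ∀ i, f i θ' = y i}) ^ 2 := by
  intro θ0
  set S : Set (EuclideanSpace ℝ (Fin p)) := {θ' | ∀ i, f i θ' = y i} with hS
  have hn' : (0 : ℝ) < n := by exact_mod_cast hn
  set d := Metric.infDist θ0 S with hd
  have hd0 : 0 ≤ d := Metric.infDist_nonneg
  let Q : EuclideanSpace ℝ (Fin p) → ℝ := fun θ => ∑ i, (y i - f i θ) ^ 2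
  have hQ0 : ∀ θ, 0 ≤ Q θ := fun θ => Finset.sum_nonneg fun i _ => sq_nonneg _
  have key : √lam0 * d ≤ √(Q θ0) := by
    by_contra! hlt
    have hsl : 0 < √lam0 := Real.sqrt_pos.2 hlam0
    have hdpos : 0 < d := by
      rcases hd0.eq_or_lt with h | h
      · rw [← h, mul_zero] at hlt
        exact absurd hlt (not_lt.2 (Real.sqrt_nonneg _))
      · exact h
    obtain ⟨c, hc1, hc2⟩ := exists_between ((div_lt_iff₀ hdpos).2 hlt)
    have hc0 : 0 < c := lt_of_le_of_lt (by positivity) hc1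
    rw [div_lt_iff₀ hdpos] at hc1
    have hcont : Continuous (fun θ => √(Q θ) + c * dist θ θ0) := by
      have : ∀ i, Continuous (f i) := fun i => (hf i).continuous
      fun_prop
    have hco : Filter.Tendsto (fun θ => √(Q θ) + c * dist θ θ0)
        (Filter.cocompact (EuclideanSpace ℝ (Fin p))) Filter.atTop := by
      refine Filter.tendsto_atTop_mono (f := fun θ => c * dist θ θ0) ?_ ?_
      · intro θ
        have := Real.sqrt_nonneg (Q θ)
        linarith
      · exact (tendsto_dist_right_cocompact_atTop θ0).const_mul_atTop hc0
    obtain ⟨θ1, hmin⟩ := hcont.exists_forall_le hco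
    have h10 := hmin θ0
    simp only [dist_self, mul_zero, add_zero] at h10
    have hnot : θ1 ∉ S := by
      intro hmem
      have h1 : d ≤ dist θ0 θ1 := Metric.infDist_le_dist_of_mem hmem
      rw [dist_comm] at h1
      have := Real.sqrt_nonneg (Q θ1)
      nlinarith
    have hQpos : 0 < Q θ1 := by
      refine lt_of_le_of_ne (hQ0 θ1) fun h => hnot ?_
      intro i
      have := (Finset.sum_eq_zero_iff_of_nonneg (fun i _ => sq_nonneg (y i - f i θ1))).1 h.symm i
        (Finset.mem_univ i)
      have := pow_eq_zero_iff (two_ne_zero) |>.1 this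
      linarith
    let r : Fin n → ℝ := fun i => y i - f i θ1
    let w : EuclideanSpace ℝ (Fin p) := ∑ i, r i • gradient (f i) θ1
    have hw : ‖w‖ ^ 2 = ∑ i, ∑ j, r i * r j * ⟪gradient (f i) θ1, gradient (f j) θ1⟫ := by
      rw [← real_inner_self_eq_norm_sq]
      simp only [w, sum_inner, inner_sum, real_inner_smul_left, real_inner_smul_right]
      refine Finset.sum_congr rfl fun i _ => Finset.sum_congr rfl fun j _ => ?_
      rw [real_inner_comm]
      ring
    have hwge : lam0 * Q θ1 ≤ ‖w‖ ^ 2 := by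
      rw [hw]; exact hNTK θ1 r
    have hderf : ∀ i, HasDerivAt (fun t : ℝ => f i (θ1 + t • w)) ⟪gradient (f i) θ1, w⟫ 0 := by
      intro i
      have h1 : HasGradientAt (f i) (gradient (f i) θ1) θ1 :=
        ((hf i).differentiable one_ne_zero θ1).hasGradientAt
      have h2 := h1.hasFDerivAt
      have h3 : HasDerivAt (fun t : ℝ => θ1 + t • w) w 0 := by
        simpa using ((hasDerivAt_id (0 : ℝ)).smul_const w).const_add θ1
      have h4 := HasFDerivAt.comp_hasDerivAt_of_eq (0 : ℝ) h2 h3 (by simp)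
      have h5 : HasDerivAt (fun t : ℝ => f i (θ1 + t • w)) _ 0 := h4
      simpa using h5
    have hderQ : HasDerivAt (fun t : ℝ => Q (θ1 + t • w)) (-2 * ‖w‖ ^ 2) 0 := by
      have h1 : HasDerivAt (fun t : ℝ => Q (θ1 + t • w))
          (∑ i, (2 * r i * (-⟪gradient (f i) θ1, w⟫))) 0 := by
        refine HasDerivAt.fun_sum fun i _ => ?_
        have := ((hderf i).const_sub (y i)).fun_pow 2
        simpa [r] using this
      convert h1 using 1
      rw [← real_inner_self_eq_norm_sq]
      conv_lhs => enter [2, 2]; simp only [w]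
      conv_lhs => rw [sum_inner, Finset.mul_sum] 
      refine Finset.sum_congr rfl fun i _ => ?_
      rw [real_inner_smul_left]
      ring
    have hders := hderQ.sqrt (by simpa using hQpos.ne')
    have hslope := hders.tendsto_slope_zero_right
    have hfin : -(c * ‖w‖) ≤ -2 * ‖w‖ ^ 2 / (2 * √(Q θ1)) := by
      have hs2 : Filter.Tendsto (fun t : ℝ => t⁻¹ • (√(Q (θ1 + t • w)) - √(Q θ1)))
          (nhdsWithin 0 (Set.Ioi 0)) (nhds (-2 * ‖w‖ ^ 2 / (2 * √(Q θ1)))) := by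
        simpa using hslope
      refine ge_of_tendsto hs2 ?_
      filter_upwards [self_mem_nhdsWithin] with t ht
      have ht : 0 < t := ht
      have h1 := hmin (θ1 + t • w)
      have h2 : dist (θ1 + t • w) θ0 ≤ t * ‖w‖ + dist θ1 θ0 := by
        refine (dist_triangle _ θ1 _).trans ?_
        simp [dist_eq_norm, norm_smul, abs_of_pos ht]
      have h3 := mul_le_mul_of_nonneg_left h2 hc0.le
      rw [smul_eq_mul, inv_mul_eq_div, le_div_iff₀ ht]
      linarith
    have hg : 0 < √(Q θ1) := Real.sqrt_pos.2 hQpos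
    have hwpos : √lam0 * √(Q θ1) ≤ ‖w‖ := by
      rw [← Real.sqrt_mul hlam0.le]
      exact Real.sqrt_le_iff.2 ⟨norm_nonneg _, hwge⟩
    have hwp : 0 < ‖w‖ := lt_of_lt_of_le (by positivity) hwpos
    rw [le_div_iff₀ (by positivity)] at hfin
    have : ‖w‖ * ‖w‖ ≤ ‖w‖ * (c * √(Q θ1)) := by nlinarith
    have := le_of_mul_le_mul_left this hwp
    nlinarith
  have hsq : lam0 * d ^ 2 ≤ Q θ0 := by
    have := pow_le_pow_left₀ (by positivity) key 2
    rwa [mul_pow, Real.sq_sqrt hlam0.le, Real.sq_sqrt (hQ0 _)] at this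
  rw [hL]
  change lam0 / (2 * (n : ℝ)) * d ^ 2 ≤ 1 / (2 * (n : ℝ)) * Q θ0
  have := mul_le_mul_of_nonneg_left hsq (by positivity : 0 ≤ 1 / (2 * (n : ℝ)))
  calc _ = 1 / (2 * (n : ℝ)) * (lam0 * d ^ 2) := by ring
    _ ≤ _ := this
end
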